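/- Interior Hölder estimate for the fractional Laplacian (Hölder range): let β satisfy 0 < β < 2s and β ≤ 1. There exists a constant C, depending only on n, s and β, with the following property: if w : ℝⁿ → ℝ is infinitely differentiable, ∫_{ℝⁿ} (1 + |x|)^{−n−2s} |w(x)| dx < ∞, h : ℝⁿ → ℝ is bounded on the ball B₂ = B(0,2), and for every x ∈ B₂ the value (−Δ)^s w(x) exists and equals h(x), then for all x, y in the ball B_{1/2} = B(0, 1/2): |w(x) − w(y)| ≤ C (∫_{ℝⁿ} (1 + |z|)^{−n−2s} |w(z)| dz + sup_{B₂} |w| + sup_{B₂} |h|) |x − y|^β, and also sup_{B_{1/2}} |w| ≤ C (∫_{ℝⁿ} (1 + |z|)^{−n−2s} |w(z)| dz + sup_{B₂} |w| + sup_{B₂} |h|). -/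

import Mathlib

open MeasureTheory Metric Set Filter

/-- `fracLapEq n s u x g` : the integral fractional Laplacian `(−Δ)^s u(x)` exists
(as a principal value) and equals `g`. -/
def fracLapEq (n : ℕ) (s : ℝ) (u : EuclideanSpace ℝ (Fin n) → ℝ)
    (x : EuclideanSpace ℝ (Fin n)) (g : ℝ) : Prop :=
  Tendsto (fun ε : ℝ =>
      (2 ^ (2 * s) * s * Real.Gamma (s + n / 2) /
          (Real.pi ^ ((n : ℝ) / 2) * Real.Gamma (1 - s))) *
        ∫ y in {y : EuclideanSpace ℝ (Fin n) | ε < dist y x},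
          (u x - u y) / dist x y ^ ((n : ℝ) + 2 * s))
    (nhdsWithin 0 (Ioi 0)) (nhds g)

/-- the `L^∞(S)` norm, as `sSup {|f x| : x ∈ S}`. -/
noncomputable def supOn {α : Type*} (S : Set α) (f : α → ℝ) : ℝ :=
  sSup ((fun x => |f x|) '' S)

/-!
The proof doubles the variables (Ishii–Lions). If `w x₀ - w y₀ > L * φ ‖x₀ - y₀‖` for a concave
modulus `φ r ≈ r ^ β`, then `w x - w y - L * φ ‖x - y‖ - K * ‖x - x₀‖ ^ 2` has a positive maximum,
attained at some `x ≠ y` well inside `B₂`, and there `(-Δ)^s w x - (-Δ)^s w y` is estimated from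
below by coupling the jumps `z` at `x` with jumps at `y`. Jumps with `‖z‖ < ‖x - y‖ / 4` are
reflected across the hyperplane orthogonal to `x - y`: the distance then changes by exactly
`± 2 * ⟪e, z⟫`, where `e` is the direction of `x - y`, so the strict concavity of `φ` produces a
gain of order `L * ‖x - y‖ ^ (γ - 2 * s)` with `γ < 2 * s`. Larger jumps inside the ball are made in
parallel, which costs only the localisation term, and the far jumps are controlled by the weighted
`L¹` norm. Since both values of `(-Δ)^s w` are bounded, `L` cannot be large.
-/

open scoped Topology

/-- A modulus comparable to `r ^ β` on `[0, 4]` which, on the interval of half-width `r / 2` around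
each `r > 0`, is strongly concave with constant `m * r ^ (γ - 2)`. Smaller `γ` means more
concavity at small scales, and `γ < 2 * s` is what beats the kernel of `(-Δ)^s`. -/
structure IsHolderModulus (φ : ℝ → ℝ) (β m γ : ℝ) : Prop where
  continuous : Continuous φ
  half_rpow_le : ∀ r ∈ Icc (0 : ℝ) 4, r ^ β / 2 ≤ φ r
  le_rpow : ∀ r ∈ Icc (0 : ℝ) 4, φ r ≤ r ^ β
  strongConcaveOn : ∀ r, 0 < r → StrongConcaveOn (Icc (r / 2) (3 * r / 2)) (m * r ^ (γ - 2)) φ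

lemma IsHolderModulus.nonneg {φ : ℝ → ℝ} {β m γ : ℝ} (hφ : IsHolderModulus φ β m γ) {r : ℝ}
    (hr : r ∈ Icc (0 : ℝ) 4) : 0 ≤ φ r :=
  (div_nonneg (Real.rpow_nonneg hr.1 β) zero_le_two).trans (hφ.half_rpow_le r hr)

lemma strongConcaveOn_Icc_of_hasDerivAt2_le {f f' f'' : ℝ → ℝ} {a b κ : ℝ}
    (hf : ∀ x ∈ Icc a b, HasDerivAt f (f' x) x) (hf' : ∀ x ∈ Ioo a b, HasDerivAt f' (f'' x) x)
    (hκ : ∀ x ∈ Ioo a b, f'' x ≤ -κ) : StrongConcaveOn (Icc a b) κ f := by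
  rw [strongConcaveOn_iff_convex]
  simp only [Real.norm_eq_abs, sq_abs]
  refine concaveOn_of_hasDerivWithinAt2_nonpos (f' := fun x => f' x + κ * x)
    (f'' := fun x => f'' x + κ) (convex_Icc a b) ?_ ?_ ?_ ?_
  · exact (HasDerivAt.continuousOn hf).add (by fun_prop)
  all_goals intro x hx; rw [interior_Icc] at hx
  · have hquad := (hasDerivAt_pow 2 x).const_mul (κ / 2)
    refine (((hf x (Ioo_subset_Icc_self hx)).add hquad).congr_deriv ?_).hasDerivWithinAt
    simp only [Nat.cast_ofNat, Nat.add_one_sub_one, pow_one]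
    ring
  · simpa using ((hf' x hx).fun_add ((hasDerivAt_id x).const_mul κ)).hasDerivWithinAt
  · linarith [hκ x hx]

lemma second_difference_le_of_strongConcaveOn {f : ℝ → ℝ} {S : Set ℝ} {κ r u : ℝ}
    (hf : StrongConcaveOn S κ f) (hadd : r + u ∈ S) (hsub : r - u ∈ S) :
    f (r + u) + f (r - u) - 2 * f r ≤ -(κ * u ^ 2) := by
  have hmid := hf.2 hadd hsub (show (0 : ℝ) ≤ 1 / 2 by norm_num) (show (0 : ℝ) ≤ 1 / 2 by norm_num)
    (by norm_num)
  have hcenter : 1 / 2 * (r + u) + 1 / 2 * (r - u) = r := by ring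
  have hdist : r + u - (r - u) = 2 * u := by ring
  simp only [smul_eq_mul, hcenter, hdist, Real.norm_eq_abs, sq_abs] at hmid
  linarith

lemma strongConcaveOn_linear_add_rpow {a b q r : ℝ} (hq0 : 0 ≤ q) (hq2 : q < 2)
    (hb : 0 ≤ b * q * (1 - q)) (hr : 0 < r) :
    StrongConcaveOn (Icc (r / 2) (3 * r / 2)) (4 / 9 * (b * q * (1 - q)) * r ^ (q - 2))
      (fun x => a * x + b * x ^ q) := by
  have hpos : ∀ x ∈ Icc (r / 2) (3 * r / 2), 0 < x := fun x hx => by linarith [hx.1]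
  refine strongConcaveOn_Icc_of_hasDerivAt2_le (f' := fun x => a + b * (q * x ^ (q - 1)))
    (f'' := fun x => b * (q * ((q - 1) * x ^ (q - 1 - 1)))) ?_ ?_ ?_
  · intro x hx
    simpa using ((hasDerivAt_id x).const_mul a).fun_add
      ((Real.hasDerivAt_rpow_const (p := q) (Or.inl (hpos x hx).ne')).const_mul b)
  · intro x hx
    exact (((Real.hasDerivAt_rpow_const (Or.inl (hpos x (Ioo_subset_Icc_self hx)).ne')).const_mul
      q).const_mul b).const_add a
  · intro x hx
    have hfactor : (4 / 9 : ℝ) ≤ (3 / 2) ^ (q - 2) := by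
      calc (4 / 9 : ℝ) = (3 / 2) ^ (-2 : ℝ) := by rw [Real.rpow_neg (by norm_num)]; norm_num
        _ ≤ (3 / 2) ^ (q - 2) :=
          Real.rpow_le_rpow_of_exponent_le (by norm_num) (by linarith)
    have hxr : 4 / 9 * r ^ (q - 2) ≤ x ^ (q - 2) := by
      calc 4 / 9 * r ^ (q - 2) ≤ (3 / 2) ^ (q - 2) * r ^ (q - 2) := by gcongr
        _ = (3 * r / 2) ^ (q - 2) := by
          rw [← Real.mul_rpow (by norm_num) hr.le]; congr 1; ring
        _ ≤ x ^ (q - 2) := Real.rpow_le_rpow_of_nonpos (hpos x (Ioo_subset_Icc_self hx)) hx.2.le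
          (by linarith)
    rw [show q - 1 - 1 = q - 2 by ring]
    linarith [mul_le_mul_of_nonneg_left hxr hb]

lemma isHolderModulus_rpow {β : ℝ} (hβ : 0 < β) (hβ1 : β < 1) :
    IsHolderModulus (fun r => r ^ β) β (4 / 9 * (β * (1 - β))) β where
  continuous := Real.continuous_rpow_const hβ.le
  half_rpow_le r hr := half_le_self (Real.rpow_nonneg hr.1 β)
  le_rpow _ _ := le_rfl
  strongConcaveOn r hr := by
    have hnonneg : 0 ≤ 1 * β * (1 - β) := by nlinarith
    simpa using strongConcaveOn_linear_add_rpow (a := 0) hβ.le (by linarith) hnonneg hr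

lemma isHolderModulus_sub_rpow {γ : ℝ} (hγ1 : 1 < γ) (hγ2 : γ < 2) :
    IsHolderModulus (fun r => r - r ^ γ / 8) 1 (1 / 18 * (γ * (γ - 1))) γ where
  continuous := continuous_id.sub ((Real.continuous_rpow_const (by linarith)).div_const 8)
  half_rpow_le r hr := by
    have hγr : r ^ γ ≤ 4 * r := by
      calc r ^ γ = r * r ^ (γ - 1) := by
            rw [← Real.rpow_one_add' hr.1 (by linarith)]; congr 1; ring
        _ ≤ r * 4 ^ (γ - 1) := by gcongr <;> linarith [hr.1, hr.2]
        _ ≤ r * 4 ^ (1 : ℝ) := by gcongr <;> linarith [hr.1]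
        _ = 4 * r := by rw [Real.rpow_one, mul_comm]
    rw [Real.rpow_one]
    linarith
  le_rpow r hr := by
    rw [Real.rpow_one]
    linarith [Real.rpow_nonneg hr.1 γ]
  strongConcaveOn r hr := by
    have hnonneg : 0 ≤ -(1 / 8) * γ * (1 - γ) := by nlinarith
    convert strongConcaveOn_linear_add_rpow (a := 1) (by linarith) hγ2 hnonneg hr using 2 <;> ring

lemma exists_isHolderModulus {s β : ℝ} (hβ : 0 < β) (hβ1 : β ≤ 1) (hs : s < 1)
    (hβs : β < 2 * s) : ∃ φ m γ, 0 < m ∧ γ < 2 * s ∧ IsHolderModulus φ β m γ := by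
  rcases hβ1.lt_or_eq with hlt | rfl
  · exact ⟨_, _, β, by nlinarith, hβs, isHolderModulus_rpow hβ hlt⟩
  · exact ⟨_, _, (1 + 2 * s) / 2, by nlinarith, by linarith,
      isHolderModulus_sub_rpow (by linarith) (by linarith)⟩

section Tail

variable {E : Type*} [NormedAddCommGroup E]

/-- The integrand `(w x - w (x + z)) / ‖z‖ ^ p` of the fractional Laplacian (where
`p = dim E + 2 * s`), as a function of the displacement `z` from `x`. -/
noncomputable def increment (p : ℝ) (w : E → ℝ) (x z : E) : ℝ :=
  (w x - w (x + z)) / ‖z‖ ^ p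

lemma inv_rpow_norm_le_mul_one_add_norm_rpow {p R δ : ℝ} (hp : 0 ≤ p) (hδ : 0 < δ) {x z : E}
    (hx : ‖x‖ ≤ R) (hz : δ ≤ ‖z‖) :
    (‖z‖ ^ p)⁻¹ ≤ ((1 + R) / δ + 1) ^ p * (1 + ‖x + z‖) ^ (-p) := by
  have hR : 0 ≤ R := (norm_nonneg x).trans hx
  have hz0 : 0 < ‖z‖ := hδ.trans_le hz
  have hlin : 1 + ‖x + z‖ ≤ ((1 + R) / δ + 1) * ‖z‖ := by
    calc 1 + ‖x + z‖ ≤ (1 + R) / δ * δ + ‖z‖ := by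
          rw [div_mul_cancel₀ _ hδ.ne']; linarith [norm_add_le x z]
      _ ≤ (1 + R) / δ * ‖z‖ + ‖z‖ := by gcongr
      _ = ((1 + R) / δ + 1) * ‖z‖ := by ring
  have hpow := Real.rpow_le_rpow (by positivity) hlin hp
  rw [Real.mul_rpow (by positivity) hz0.le] at hpow
  rwa [Real.rpow_neg (by positivity), ← div_eq_mul_inv,
    inv_le_comm₀ (by positivity) (by positivity), inv_div, div_le_iff₀' (by positivity)]

lemma abs_translate_div_rpow_norm_le (w : E → ℝ) {p R δ : ℝ} (hp : 0 ≤ p) (hδ : 0 < δ) {x z : E}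
    (hx : ‖x‖ ≤ R) (hz : δ ≤ ‖z‖) :
    |w (x + z) / ‖z‖ ^ p| ≤ ((1 + R) / δ + 1) ^ p * ((1 + ‖x + z‖) ^ (-p) * |w (x + z)|) := by
  rw [abs_div, abs_of_nonneg (by positivity : 0 ≤ ‖z‖ ^ p), div_eq_inv_mul, ← mul_assoc]
  gcongr
  exact inv_rpow_norm_le_mul_one_add_norm_rpow hp hδ hx hz

variable [InnerProductSpace ℝ E] [FiniteDimensional ℝ E] [MeasurableSpace E] [BorelSpace E]

/-- Membership of `w` in the weighted space `L¹((1 + ‖z‖) ^ (-p) dz)`. -/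
def TailIntegrable (p : ℝ) (w : E → ℝ) : Prop :=
  Integrable fun z => (1 + ‖z‖) ^ (-p) * w z

/-- The norm of `w` in `L¹((1 + ‖z‖) ^ (-p) dz)`, which controls the far part of the nonlocal
integrals. -/
noncomputable def tailNorm (p : ℝ) (w : E → ℝ) : ℝ :=
  ∫ z, (1 + ‖z‖) ^ (-p) * |w z|

lemma tailNorm_nonneg (p : ℝ) (w : E → ℝ) : 0 ≤ tailNorm p w :=
  integral_nonneg fun _ => by positivity

lemma tailIntegrable_of_integrable_mul_abs {p : ℝ} {w : E → ℝ} (hw : AEStronglyMeasurable w)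
    (hint : Integrable fun z => (1 + ‖z‖) ^ (-p) * |w z|) : TailIntegrable p w := by
  have hweight : Measurable fun z : E => (1 + ‖z‖) ^ (-p) := by fun_prop
  refine hint.mono (hweight.aestronglyMeasurable.mul hw) (Eventually.of_forall fun z => ?_)
  simp only [norm_mul, Real.norm_eq_abs, abs_abs, le_refl]

namespace TailIntegrable

variable {p R δ : ℝ} {w : E → ℝ} {x : E}

lemma aestronglyMeasurable (hw : TailIntegrable p w) : AEStronglyMeasurable w := by
  have hcancel : w = fun z => (1 + ‖z‖) ^ p * ((1 + ‖z‖) ^ (-p) * w z) := by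
    ext z
    rw [← mul_assoc, ← Real.rpow_add (by positivity), add_neg_cancel, Real.rpow_zero, one_mul]
  rw [hcancel]
  exact (by fun_prop : Measurable fun z : E => (1 + ‖z‖) ^ p).aestronglyMeasurable.mul
    (Integrable.aestronglyMeasurable hw)

lemma integrable_mul_abs (hw : TailIntegrable p w) :
    Integrable fun z => (1 + ‖z‖) ^ (-p) * |w z| := by
  refine (Integrable.norm hw).congr (Eventually.of_forall fun z => ?_)
  simp only [norm_mul, Real.norm_eq_abs, abs_of_nonneg (show 0 ≤ (1 + ‖z‖) ^ (-p) by positivity)]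

lemma integrableOn_translate_div (hw : TailIntegrable p w) (hp : 0 ≤ p) (hδ : 0 < δ) (x : E) :
    IntegrableOn (fun z => w (x + z) / ‖z‖ ^ p) ((‖·‖) ⁻¹' Ici δ) := by
  refine Integrable.mono'
    ((hw.integrable_mul_abs.comp_add_left x).const_mul (((1 + ‖x‖) / δ + 1) ^ p)).integrableOn ?_
    (ae_restrict_of_forall_mem (measurable_norm measurableSet_Ici) fun z hz =>
      abs_translate_div_rpow_norm_le w hp hδ le_rfl hz)
  exact ((hw.aestronglyMeasurable.comp_quasiMeasurePreserving
    (quasiMeasurePreserving_add_left volume x)).mul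
    (measurable_norm.pow_const p).inv.aestronglyMeasurable).restrict

lemma setIntegral_abs_translate_div_le (hw : TailIntegrable p w) (hp : 0 ≤ p) (hδ : 0 < δ)
    (hx : ‖x‖ ≤ R) :
    ∫ z in (‖·‖) ⁻¹' Ici δ, |w (x + z) / ‖z‖ ^ p| ≤ ((1 + R) / δ + 1) ^ p * tailNorm p w := by
  have hR : 0 ≤ R := (norm_nonneg x).trans hx
  have hdom : Integrable fun z =>
      ((1 + R) / δ + 1) ^ p * ((1 + ‖x + z‖) ^ (-p) * |w (x + z)|) :=
    (hw.integrable_mul_abs.comp_add_left x).const_mul _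
  calc ∫ z in (‖·‖) ⁻¹' Ici δ, |w (x + z) / ‖z‖ ^ p|
      ≤ ∫ z in (‖·‖) ⁻¹' Ici δ, ((1 + R) / δ + 1) ^ p * ((1 + ‖x + z‖) ^ (-p) * |w (x + z)|) :=
        setIntegral_mono_on (hw.integrableOn_translate_div hp hδ x).abs hdom.integrableOn
          (measurable_norm measurableSet_Ici) fun z hz =>
            abs_translate_div_rpow_norm_le w hp hδ hx hz
    _ ≤ ∫ z, ((1 + R) / δ + 1) ^ p * ((1 + ‖x + z‖) ^ (-p) * |w (x + z)|) :=
        setIntegral_le_integral hdom (Eventually.of_forall fun z => by positivity)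
    _ = ((1 + R) / δ + 1) ^ p * tailNorm p w := by
        rw [integral_const_mul, tailNorm,
          integral_add_left_eq_self (fun z => (1 + ‖z‖) ^ (-p) * |w z|) x]

end TailIntegrable

lemma tailIntegrable_one {p : ℝ} (hp : Module.finrank ℝ E < p) :
    TailIntegrable p (fun _ : E => 1) := by
  simpa [TailIntegrable] using integrable_one_add_norm (μ := (volume : Measure E)) hp

/-- The mass `∫ ‖z‖ ^ (-p) dz` of the kernel outside the ball of radius `δ`. -/
noncomputable def kernelTailMass (E : Type*) [NormedAddCommGroup E] [InnerProductSpace ℝ E]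
    [FiniteDimensional ℝ E] [MeasurableSpace E] [BorelSpace E] (p δ : ℝ) : ℝ :=
  ∫ z in ((‖·‖) ⁻¹' Ici δ : Set E), (‖z‖ ^ p)⁻¹

lemma kernelTailMass_nonneg (p δ : ℝ) : 0 ≤ kernelTailMass E p δ :=
  integral_nonneg fun _ => inv_nonneg.2 (by positivity)

lemma integrableOn_inv_rpow_norm {p δ : ℝ} (hp : Module.finrank ℝ E < p) (hδ : 0 < δ) :
    IntegrableOn (fun z : E => (‖z‖ ^ p)⁻¹) ((‖·‖) ⁻¹' Ici δ) := by
  have hp0 : 0 ≤ p := (Nat.cast_nonneg _).trans hp.le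
  simpa using (tailIntegrable_one hp).integrableOn_translate_div hp0 hδ (0 : E)

namespace TailIntegrable

variable {p R δ : ℝ} {w : E → ℝ} {x : E}

lemma integrableOn_increment (hw : TailIntegrable p w) (hp : Module.finrank ℝ E < p)
    (hδ : 0 < δ) (x : E) : IntegrableOn (increment p w x) ((‖·‖) ⁻¹' Ici δ) := by
  have hp0 : 0 ≤ p := (Nat.cast_nonneg _).trans hp.le
  refine (((integrableOn_inv_rpow_norm hp hδ).const_mul (w x)).sub
    (hw.integrableOn_translate_div hp0 hδ x)).congr (Eventually.of_forall fun z => ?_)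
  simp only [increment, Pi.sub_apply, sub_mul, div_eq_mul_inv]

lemma abs_setIntegral_increment_le (hw : TailIntegrable p w) (hp : Module.finrank ℝ E < p)
    (hδ : 0 < δ) (hx : ‖x‖ ≤ R) :
    |∫ z in (‖·‖) ⁻¹' Ici δ, increment p w x z| ≤
      |w x| * kernelTailMass E p δ + ((1 + R) / δ + 1) ^ p * tailNorm p w := by
  have hp0 : 0 ≤ p := (Nat.cast_nonneg _).trans hp.le
  have hconst := (integrableOn_inv_rpow_norm (E := E) hp hδ).const_mul |w x|
  have htranslate := (hw.integrableOn_translate_div hp0 hδ x).abs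
  have hle : ∀ z, ‖increment p w x z‖ ≤ |w x| * (‖z‖ ^ p)⁻¹ + |w (x + z) / ‖z‖ ^ p| := by
    intro z
    rw [increment, norm_div, abs_div, Real.norm_eq_abs, Real.norm_eq_abs,
      abs_of_nonneg (by positivity : 0 ≤ ‖z‖ ^ p), ← div_eq_mul_inv, ← add_div]
    gcongr
    exact abs_sub _ _
  calc |∫ z in (‖·‖) ⁻¹' Ici δ, increment p w x z|
      ≤ ∫ z in (‖·‖) ⁻¹' Ici δ, (|w x| * (‖z‖ ^ p)⁻¹ + |w (x + z) / ‖z‖ ^ p|) :=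
        norm_integral_le_of_norm_le (hconst.add htranslate) (Eventually.of_forall hle)
    _ = |w x| * kernelTailMass E p δ + ∫ z in (‖·‖) ⁻¹' Ici δ, |w (x + z) / ‖z‖ ^ p| := by
        rw [integral_add hconst htranslate, integral_const_mul, kernelTailMass]
    _ ≤ _ := by gcongr; exact hw.setIntegral_abs_translate_div_le hp0 hδ hx

end TailIntegrable

/-- The second moment `∫ ‖z‖ ^ 2 * ‖z‖ ^ (-p) dz` of the kernel in the ball of radius `δ`. -/
noncomputable def kernelSecondMoment (E : Type*) [NormedAddCommGroup E] [InnerProductSpace ℝ E]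
    [FiniteDimensional ℝ E] [MeasurableSpace E] [BorelSpace E] (p δ : ℝ) : ℝ :=
  ∫ z in ((‖·‖) ⁻¹' Iio δ : Set E), ‖z‖ ^ 2 / ‖z‖ ^ p

lemma kernelSecondMoment_nonneg (p δ : ℝ) : 0 ≤ kernelSecondMoment E p δ :=
  integral_nonneg fun _ => by positivity

lemma integrableOn_norm_sq_div_rpow {p δ : ℝ} (hp : p < Module.finrank ℝ E + 2) :
    IntegrableOn (fun z : E => ‖z‖ ^ 2 / ‖z‖ ^ p) ((‖·‖) ⁻¹' Iio δ) := by
  have hball : ((‖·‖) ⁻¹' Iio δ : Set E) = ball 0 δ := by ext; simp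
  rw [hball]
  rcases subsingleton_or_nontrivial E with _ | _
  · simp only [Subsingleton.elim _ (0 : E), norm_zero]
    exact integrableOn_const measure_ball_lt_top.ne
  refine integrableOn_ball_of_norm_le_rpow (C := 1) (α := p - 2) Module.finrank_pos (by linarith)
    (Eventually.of_forall fun z => ?_) (by fun_prop : Measurable _).aestronglyMeasurable
  rcases eq_or_ne z 0 with rfl | hz
  · simp only [norm_zero, ne_eq, OfNat.ofNat_ne_zero, not_false_eq_true, zero_pow, zero_div]
    positivity
  · rw [Real.norm_of_nonneg (by positivity), one_mul, neg_sub, Real.rpow_sub (norm_pos_iff.2 hz),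
      Real.rpow_two]

end Tail

section Coupling

variable {E : Type*} [NormedAddCommGroup E] [InnerProductSpace ℝ E] [FiniteDimensional ℝ E]
  [MeasurableSpace E] [BorelSpace E] {I : Set ℝ} {f g : E → ℝ}

lemma integrableOn_preimage_norm_comp_linearIsometryEquiv (T : E ≃ₗᵢ[ℝ] E)
    (hf : IntegrableOn f ((‖·‖) ⁻¹' I)) : IntegrableOn (fun z => f (T z)) ((‖·‖) ⁻¹' I) := by
  have hpre : T ⁻¹' ((‖·‖) ⁻¹' I) = (‖·‖) ⁻¹' I := by ext; simp
  rw [← hpre]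
  exact (T.measurePreserving.integrableOn_comp_preimage
    T.toMeasurableEquiv.measurableEmbedding).2 hf

lemma setIntegral_preimage_norm_comp_linearIsometryEquiv (T : E ≃ₗᵢ[ℝ] E) (f : E → ℝ)
    (I : Set ℝ) : ∫ z in (‖·‖) ⁻¹' I, f (T z) = ∫ z in (‖·‖) ⁻¹' I, f z := by
  have hpre : T ⁻¹' ((‖·‖) ⁻¹' I) = (‖·‖) ⁻¹' I := by ext; simp
  nth_rewrite 1 [← hpre]
  exact T.measurePreserving.setIntegral_preimage_emb T.toMeasurableEquiv.measurableEmbedding f _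

lemma integrableOn_preimage_norm_add_neg (hf : IntegrableOn f ((‖·‖) ⁻¹' I)) :
    IntegrableOn (fun z => f z + f (-z)) ((‖·‖) ⁻¹' I) :=
  hf.add (integrableOn_preimage_norm_comp_linearIsometryEquiv (LinearIsometryEquiv.neg ℝ) hf)

lemma setIntegral_preimage_norm_add_neg (hf : IntegrableOn f ((‖·‖) ⁻¹' I)) :
    ∫ z in (‖·‖) ⁻¹' I, (f z + f (-z)) = 2 * ∫ z in (‖·‖) ⁻¹' I, f z := by
  have hneg := integrableOn_preimage_norm_comp_linearIsometryEquiv (LinearIsometryEquiv.neg ℝ) hf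
  have hneg_eq :=
    setIntegral_preimage_norm_comp_linearIsometryEquiv (LinearIsometryEquiv.neg ℝ) f I
  simp only [LinearIsometryEquiv.coe_neg] at hneg hneg_eq
  rw [integral_add hf hneg, hneg_eq, two_mul]

lemma integrableOn_preimage_norm_coupling (T : E ≃ₗᵢ[ℝ] E) (hf : IntegrableOn f ((‖·‖) ⁻¹' I))
    (hg : IntegrableOn g ((‖·‖) ⁻¹' I)) :
    IntegrableOn (fun z => f z + f (-z) - (g (T z) + g (-T z))) ((‖·‖) ⁻¹' I) :=
  (integrableOn_preimage_norm_add_neg hf).sub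
    (integrableOn_preimage_norm_comp_linearIsometryEquiv T (integrableOn_preimage_norm_add_neg hg))

lemma setIntegral_preimage_norm_coupling (T : E ≃ₗᵢ[ℝ] E) (hf : IntegrableOn f ((‖·‖) ⁻¹' I))
    (hg : IntegrableOn g ((‖·‖) ⁻¹' I)) :
    ∫ z in (‖·‖) ⁻¹' I, (f z + f (-z) - (g (T z) + g (-T z))) =
      2 * ((∫ z in (‖·‖) ⁻¹' I, f z) - ∫ z in (‖·‖) ⁻¹' I, g z) := by
  have hg' := integrableOn_preimage_norm_add_neg hg
  rw [integral_sub (integrableOn_preimage_norm_add_neg hf)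
      (integrableOn_preimage_norm_comp_linearIsometryEquiv T hg'),
    setIntegral_preimage_norm_comp_linearIsometryEquiv T (fun z => g z + g (-z)),
    setIntegral_preimage_norm_add_neg hf, setIntegral_preimage_norm_add_neg hg, mul_sub]

end Coupling

section Doubling

variable {E : Type*} [NormedAddCommGroup E] {w : E → ℝ} {φ : ℝ → ℝ} {L K β m γ : ℝ} {x₀ : E}

/-- The functional `w x - w y - L * φ ‖x - y‖ - K * ‖x - x₀‖ ^ 2` of the doubling-of-variables
method: `φ` penalises the distance between the two variables and `K` localises the first one. -/
def doubled (w : E → ℝ) (φ : ℝ → ℝ) (L K : ℝ) (x₀ : E) (q : E × E) : ℝ :=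
  w q.1 - w q.2 - L * φ ‖q.1 - q.2‖ - K * ‖q.1 - x₀‖ ^ 2

variable [InnerProductSpace ℝ E] {U : Set (E × E)} {p : ℝ} {x y : E}

lemma second_difference_le_of_isMaxOn_doubled {z q : E}
    (hmax : IsMaxOn (doubled w φ L K x₀) U (x, y))
    (hadd : (x + z, y + q) ∈ U) (hsub : (x - z, y - q) ∈ U) :
    (w (x + z) + w (x - z) - 2 * w x) - (w (y + q) + w (y - q) - 2 * w y) ≤
      L * (φ ‖x + z - (y + q)‖ + φ ‖x - z - (y - q)‖ - 2 * φ ‖x - y‖) + 2 * K * ‖z‖ ^ 2 := by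
  have hpar := parallelogram_law_with_norm ℝ (x - x₀) z
  have hle_add := hmax hadd
  have hle_sub := hmax hsub
  simp only [mem_ofPred_eq, doubled] at hle_add hle_sub
  rw [← add_sub_right_comm, sub_right_comm] at hpar
  linear_combination hle_add + hle_sub + K * hpar

lemma le_increment_coupling_of_isMaxOn_doubled {z q : E} {u : ℝ}
    (hφ : IsHolderModulus φ β m γ) (hL : 0 ≤ L) (hxy : x ≠ y)
    (hmax : IsMaxOn (doubled w φ L K x₀) U (x, y))
    (hadd : (x + z, y + q) ∈ U) (hsub : (x - z, y - q) ∈ U) (hq : ‖q‖ = ‖z‖)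
    (hu : |u| ≤ ‖x - y‖ / 2) (hdist_add : ‖x + z - (y + q)‖ = ‖x - y‖ + u)
    (hdist_sub : ‖x - z - (y - q)‖ = ‖x - y‖ - u) :
    L * (m * ‖x - y‖ ^ (γ - 2)) * (u ^ 2 / ‖z‖ ^ p) - 2 * K * (‖z‖ ^ 2 / ‖z‖ ^ p) ≤
      increment p w x z + increment p w x (-z) - (increment p w y q + increment p w y (-q)) := by
  obtain ⟨hu_lower, hu_upper⟩ := abs_le.1 hu
  have hconcave := second_difference_le_of_strongConcaveOn (r := ‖x - y‖) (u := u)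
    (hφ.strongConcaveOn ‖x - y‖ (norm_pos_iff.2 (sub_ne_zero.2 hxy)))
    ⟨by linarith, by linarith⟩ ⟨by linarith, by linarith⟩
  have hdiff := second_difference_le_of_isMaxOn_doubled hmax hadd hsub
  rw [hdist_add, hdist_sub] at hdiff
  have hnum : L * (m * ‖x - y‖ ^ (γ - 2)) * u ^ 2 - 2 * K * ‖z‖ ^ 2 ≤
      (w x - w (x + z)) + (w x - w (x - z)) - ((w y - w (y + q)) + (w y - w (y - q))) := by
    linear_combination hdiff + L * hconcave
  simp only [increment, norm_neg, hq, ← sub_eq_add_neg]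
  rw [← mul_div_assoc, ← mul_div_assoc, ← sub_div, ← add_div, ← add_div, ← sub_div]
  gcongr

variable [FiniteDimensional ℝ E] [MeasurableSpace E] [BorelSpace E] {δ ε : ℝ}

lemma integrableOn_sq_div_rpow_norm (hp : p < Module.finrank ℝ E + 2) (u : E →L[ℝ] ℝ) :
    IntegrableOn (fun z => u z ^ 2 / ‖z‖ ^ p) ((‖·‖) ⁻¹' Iio δ) := by
  refine ((integrableOn_norm_sq_div_rpow hp).const_mul (‖u‖ ^ 2)).mono'
    (by fun_prop : Measurable _).aestronglyMeasurable (Eventually.of_forall fun z => ?_)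
  rw [Real.norm_of_nonneg (by positivity), ← mul_div_assoc, ← mul_pow, ← sq_abs (u z)]
  gcongr
  exact u.le_opNorm z

lemma le_setIntegral_increment_coupling (hφ : IsHolderModulus φ β m γ) (hL : 0 ≤ L)
    (hxy : x ≠ y) (hp : Module.finrank ℝ E < p) (hp' : p < Module.finrank ℝ E + 2)
    (hw : TailIntegrable p w)
    (hmax : IsMaxOn (doubled w φ L K x₀) (closedBall x δ ×ˢ closedBall y δ) (x, y))
    {I : Set ℝ} (hI : MeasurableSet I) (hIε : I ⊆ Ico ε δ) (hε : 0 < ε)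
    (T : E ≃ₗᵢ[ℝ] E) (u : E →L[ℝ] ℝ) (hu : ∀ z, ‖z‖ ∈ I → |u z| ≤ ‖x - y‖ / 2)
    (hdist : ∀ z, ‖z‖ ∈ I → ‖x + z - (y + T z)‖ = ‖x - y‖ + u z) :
    L * (m * ‖x - y‖ ^ (γ - 2)) * (∫ z in (‖·‖) ⁻¹' I, u z ^ 2 / ‖z‖ ^ p) -
        2 * K * (∫ z in ((‖·‖) ⁻¹' I : Set E), ‖z‖ ^ 2 / ‖z‖ ^ p) ≤
      2 * ((∫ z in (‖·‖) ⁻¹' I, increment p w x z) - ∫ z in (‖·‖) ⁻¹' I, increment p w y z) := by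
  have hnear : ((‖·‖) ⁻¹' I : Set E) ⊆ (‖·‖) ⁻¹' Iio δ :=
    preimage_mono (hIε.trans Ico_subset_Iio_self)
  have hfar : ((‖·‖) ⁻¹' I : Set E) ⊆ (‖·‖) ⁻¹' Ici ε :=
    preimage_mono (hIε.trans Ico_subset_Ici_self)
  have hincr (v : E) : IntegrableOn (increment p w v) ((‖·‖) ⁻¹' I) :=
    (hw.integrableOn_increment hp hε v).mono_set hfar
  have hgain : IntegrableOn (fun z => u z ^ 2 / ‖z‖ ^ p) ((‖·‖) ⁻¹' I) :=
    (integrableOn_sq_div_rpow_norm hp' u).mono_set hnear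
  have hloss : IntegrableOn (fun z : E => ‖z‖ ^ 2 / ‖z‖ ^ p) ((‖·‖) ⁻¹' I) :=
    (integrableOn_norm_sq_div_rpow hp').mono_set hnear
  rw [← setIntegral_preimage_norm_coupling T (hincr x) (hincr y), ← integral_const_mul,
    ← integral_const_mul, ← integral_sub (hgain.const_mul _) (hloss.const_mul _)]
  refine setIntegral_mono_on ((hgain.const_mul _).sub (hloss.const_mul _))
    (integrableOn_preimage_norm_coupling T (hincr x) (hincr y)) (measurable_norm hI)
    fun z hz => ?_
  have hzδ : ‖z‖ ≤ δ := (hIε hz).2.le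
  have hzI : ‖-z‖ ∈ I := by rwa [norm_neg]
  refine le_increment_coupling_of_isMaxOn_doubled hφ hL hxy hmax ?_ ?_ (T.norm_map z) (hu z hz)
    (hdist z hz) ?_
  · simp [hzδ]
  · simp [hzδ]
  · simpa [sub_eq_add_neg] using hdist (-z) hzI

end Doubling

section Gain

variable {E : Type*} [NormedAddCommGroup E] [InnerProductSpace ℝ E] {e x y z : E} {r ρ ε p : ℝ}

open scoped RealInnerProductSpace

lemma norm_add_sub_add_reflection (he : ‖e‖ = 1) (hxy : x - y = r • e)
    (hz : 0 ≤ r + 2 * ⟪e, z⟫) :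
    ‖x + z - (y + (ℝ ∙ e)ᗮ.reflection z)‖ = r + 2 * ⟪e, z⟫ := by
  have hdiff : x + z - (y + (ℝ ∙ e)ᗮ.reflection z) = (r + 2 * ⟪e, z⟫) • e := by
    rw [Submodule.reflection_orthogonal_apply, Submodule.reflection_singleton_apply, he, add_smul,
      ← hxy, mul_smul]
    simp only [Real.ringHom_apply, one_pow, div_one]
    module
  rw [hdiff, norm_smul, he, mul_one, Real.norm_of_nonneg hz]

lemma half_lt_inner_of_mem_ball (he : ‖e‖ = 1) (hz : z ∈ ball ((3 * ρ / 4) • e) (ρ / 8)) :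
    ρ / 2 < ⟪e, z⟫ := by
  rw [mem_ball_iff_norm] at hz
  have hinner : ⟪e, z⟫ = 3 * ρ / 4 + ⟪e, z - (3 * ρ / 4) • e⟫ := by
    rw [inner_sub_right, real_inner_smul_right, real_inner_self_eq_norm_sq, he]
    ring
  have hdev := abs_le.1 (abs_real_inner_le_norm e (z - (3 * ρ / 4) • e))
  rw [he, one_mul] at hdev
  linarith [hdev.1, norm_nonneg (z - (3 * ρ / 4) • e)]

lemma norm_mem_Ioo_of_mem_ball (he : ‖e‖ = 1) (hz : z ∈ ball ((3 * ρ / 4) • e) (ρ / 8)) :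
    ‖z‖ ∈ Ioo (ρ / 2) ρ := by
  have hinner_le := real_inner_le_norm e z
  rw [he, one_mul] at hinner_le
  refine ⟨(half_lt_inner_of_mem_ball he hz).trans_le hinner_le, ?_⟩
  rw [mem_ball_iff_norm] at hz
  have hρ : 0 < ρ := by linarith [norm_nonneg (z - (3 * ρ / 4) • e)]
  have htri := norm_add_le ((3 * ρ / 4) • e) (z - (3 * ρ / 4) • e)
  rw [add_sub_cancel, norm_smul, he, mul_one, Real.norm_of_nonneg (by positivity)] at htri
  linarith

variable [FiniteDimensional ℝ E] [MeasurableSpace E] [BorelSpace E]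

/-- A lower bound, at scale `ρ`, for the kernel-weighted second moment of the displacement
`2 * ⟪e, z⟫` produced by the mirror coupling: the volume of a ball of radius `ρ / 8` placed
around `(3 * ρ / 4) • e`, times `ρ ^ (2 - p)`. -/
noncomputable def mirrorGain (E : Type*) [NormedAddCommGroup E] [InnerProductSpace ℝ E]
    [FiniteDimensional ℝ E] [MeasurableSpace E] [BorelSpace E] (p ρ : ℝ) : ℝ :=
  (1 / 8) ^ Module.finrank ℝ E * volume.real (ball (0 : E) 1) *
    ρ ^ (Module.finrank ℝ E + 2 - p)

lemma mirrorGain_pos (hρ : 0 < ρ) : 0 < mirrorGain E p ρ := by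
  have hball : 0 < volume.real (ball (0 : E) 1) :=
    ENNReal.toReal_pos (measure_ball_pos volume _ one_pos).ne' measure_ball_lt_top.ne
  unfold mirrorGain
  positivity

lemma mirrorGain_le_rpow_mul_mirrorGain {γ c : ℝ} (hγ : Module.finrank ℝ E + γ ≤ p)
    (hc : 0 < c) (hr : 0 < r) (hr1 : r ≤ 1) :
    mirrorGain E p c ≤ r ^ (γ - 2) * mirrorGain E p (r * c) := by
  have hscale : r ^ (γ - 2) * mirrorGain E p (r * c) =
      r ^ (Module.finrank ℝ E + γ - p) * mirrorGain E p c := by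
    rw [mirrorGain, mirrorGain, Real.mul_rpow hr.le hc.le,
      show (Module.finrank ℝ E + γ - p : ℝ) = γ - 2 + (Module.finrank ℝ E + 2 - p) by ring,
      Real.rpow_add hr]
    ring
  rw [hscale]
  exact le_mul_of_one_le_left (mirrorGain_pos hc).le
    (Real.one_le_rpow_of_pos_of_le_one_of_nonpos hr hr1 (by linarith))

lemma mirrorGain_le_setIntegral_inner_sq_div_rpow_norm (hp0 : 0 ≤ p)
    (hp : p < Module.finrank ℝ E + 2) (he : ‖e‖ = 1) (hρ : 0 < ρ) (hε : ε ≤ ρ / 2) :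
    mirrorGain E p ρ ≤ ∫ z in (‖·‖) ⁻¹' Ioo ε ρ, (2 * ⟪e, z⟫) ^ 2 / ‖z‖ ^ p := by
  have hint : IntegrableOn (fun z => (2 * ⟪e, z⟫) ^ 2 / ‖z‖ ^ p) ((‖·‖) ⁻¹' Ioo ε ρ) :=
    (integrableOn_sq_div_rpow_norm hp ((2 : ℝ) • innerSL ℝ e)).mono_set
      (preimage_mono Ioo_subset_Iio_self)
  have hsub : ball ((3 * ρ / 4) • e) (ρ / 8) ⊆ (‖·‖) ⁻¹' Ioo ε ρ := fun z hz =>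
    Ioo_subset_Ioo_left hε (norm_mem_Ioo_of_mem_ball he hz)
  have hlower : ∀ z ∈ ball ((3 * ρ / 4) • e) (ρ / 8),
      ρ ^ 2 / ρ ^ p ≤ (2 * ⟪e, z⟫) ^ 2 / ‖z‖ ^ p := by
    intro z hz
    have hinner := half_lt_inner_of_mem_ball he hz
    obtain ⟨hnorm_gt, hnorm_lt⟩ := norm_mem_Ioo_of_mem_ball he hz
    have hz0 : 0 < ‖z‖ := by linarith
    gcongr
    linarith
  calc mirrorGain E p ρ = volume.real (ball ((3 * ρ / 4) • e) (ρ / 8)) * (ρ ^ 2 / ρ ^ p) := by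
        rw [mirrorGain, measureReal_def (s := ball ((3 * ρ / 4) • e) _),
          Measure.addHaar_ball_of_pos _ _ (by positivity), ENNReal.toReal_mul,
          ENNReal.toReal_ofReal (by positivity), ← measureReal_def, Real.rpow_sub hρ,
          Real.rpow_add hρ, Real.rpow_natCast, Real.rpow_two]
        ring
    _ = ∫ _ in ball ((3 * ρ / 4) • e) (ρ / 8), ρ ^ 2 / ρ ^ p := by
        rw [setIntegral_const, smul_eq_mul]
    _ ≤ ∫ z in ball ((3 * ρ / 4) • e) (ρ / 8), (2 * ⟪e, z⟫) ^ 2 / ‖z‖ ^ p :=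
        setIntegral_mono_on (integrableOn_const measure_ball_lt_top.ne) (hint.mono_set hsub)
          measurableSet_ball hlower
    _ ≤ ∫ z in (‖·‖) ⁻¹' Ioo ε ρ, (2 * ⟪e, z⟫) ^ 2 / ‖z‖ ^ p :=
        setIntegral_mono_set hint (Eventually.of_forall fun z => by positivity)
          (Eventually.of_forall hsub)

end Gain

section PrincipalValue

open scoped RealInnerProductSpace

variable {E : Type*} [NormedAddCommGroup E] [InnerProductSpace ℝ E] [FiniteDimensional ℝ E]
  [MeasurableSpace E] [BorelSpace E]
  {w : E → ℝ} {φ : ℝ → ℝ} {L K β m γ p δ ε M R : ℝ} {x₀ x y : E}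

/-- The principal value at `0` of `∫ (w x - w (x + z)) / ‖z‖ ^ p dz` exists and equals `g`; for
`p = dim E + 2 * s` this is `(-Δ)^s w x` up to the normalising constant. -/
def HasPrincipalValueIncrement (p : ℝ) (w : E → ℝ) (x : E) (g : ℝ) : Prop :=
  Tendsto (fun ε => ∫ z in (‖·‖) ⁻¹' Ioi ε, increment p w x z) (𝓝[>] 0) (𝓝 g)

lemma setIntegral_preimage_norm_union {f : E → ℝ} {I J : Set ℝ} (hIJ : Disjoint I J)
    (hJ : MeasurableSet J) (hfI : IntegrableOn f ((‖·‖) ⁻¹' I))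
    (hfJ : IntegrableOn f ((‖·‖) ⁻¹' J)) :
    ∫ z in (‖·‖) ⁻¹' (I ∪ J), f z =
      (∫ z in (‖·‖) ⁻¹' I, f z) + ∫ z in (‖·‖) ⁻¹' J, f z := by
  rw [preimage_union, setIntegral_union (hIJ.preimage _) (measurable_norm hJ) hfI hfJ]

lemma TailIntegrable.setIntegral_increment_Ioi_eq_add (hw : TailIntegrable p w)
    (hp : Module.finrank ℝ E < p) {ρ : ℝ} (hε : 0 < ε) (hερ : ε < ρ) (hρδ : ρ ≤ δ) (x : E) :
    ∫ z in (‖·‖) ⁻¹' Ioi ε, increment p w x z =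
      (∫ z in (‖·‖) ⁻¹' Ioo ε ρ, increment p w x z) +
        (∫ z in (‖·‖) ⁻¹' Ico ρ δ, increment p w x z) +
        ∫ z in (‖·‖) ⁻¹' Ici δ, increment p w x z := by
  have hint {I : Set ℝ} (hI : I ⊆ Ici ε) : IntegrableOn (increment p w x) ((‖·‖) ⁻¹' I) :=
    (hw.integrableOn_increment hp hε x).mono_set (preimage_mono hI)
  have hfar : Ici ρ ⊆ Ici ε := Ici_subset_Ici.2 hερ.le
  rw [← Ioo_union_Ici_eq_Ioi hερ, setIntegral_preimage_norm_union
      ((Iio_disjoint_Ici le_rfl).mono_left Ioo_subset_Iio_self) measurableSet_Ici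
      (hint (Ioo_subset_Ico_self.trans Ico_subset_Ici_self)) (hint hfar),
    ← Ico_union_Ici_eq_Ici hρδ, setIntegral_preimage_norm_union
      ((Iio_disjoint_Ici le_rfl).mono_left Ico_subset_Iio_self) measurableSet_Ici
      (hint (Ico_subset_Ici_self.trans hfar)) (hint ((Ici_subset_Ici.2 hρδ).trans hfar)),
    add_assoc]

lemma setIntegral_norm_sq_div_rpow_add_le {ρ : ℝ} (hp : p < Module.finrank ℝ E + 2)
    (hρδ : ρ ≤ δ) :
    (∫ z in ((‖·‖) ⁻¹' Ioo ε ρ : Set E), ‖z‖ ^ 2 / ‖z‖ ^ p) +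
        (∫ z in ((‖·‖) ⁻¹' Ico ρ δ : Set E), ‖z‖ ^ 2 / ‖z‖ ^ p) ≤
      kernelSecondMoment E p δ := by
  have hint {I : Set ℝ} (hI : I ⊆ Iio δ) :
      IntegrableOn (fun z : E => ‖z‖ ^ 2 / ‖z‖ ^ p) ((‖·‖) ⁻¹' I) :=
    (integrableOn_norm_sq_div_rpow hp).mono_set (preimage_mono hI)
  have hIoo : Ioo ε ρ ⊆ Iio δ := Ioo_subset_Iio_self.trans (Iio_subset_Iio hρδ)
  rw [← setIntegral_preimage_norm_union
    ((Iio_disjoint_Ici le_rfl).mono Ioo_subset_Iio_self Ico_subset_Ici_self) measurableSet_Ico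
    (hint hIoo) (hint Ico_subset_Iio_self)]
  exact setIntegral_mono_set (hint subset_rfl) (Eventually.of_forall fun z => by positivity)
    (Eventually.of_forall (preimage_mono (union_subset hIoo Ico_subset_Iio_self)))

lemma le_setIntegral_increment_mirror (hφ : IsHolderModulus φ β m γ) (hL : 0 ≤ L) (hm : 0 ≤ m)
    (hxy : x ≠ y) (hp : Module.finrank ℝ E < p) (hp' : p < Module.finrank ℝ E + 2)
    (hw : TailIntegrable p w)
    (hmax : IsMaxOn (doubled w φ L K x₀) (closedBall x δ ×ˢ closedBall y δ) (x, y))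
    (hε : 0 < ε) (hεr : ε ≤ ‖x - y‖ / 8) (hδ : ‖x - y‖ / 4 ≤ δ) :
    L * (m * ‖x - y‖ ^ (γ - 2)) * mirrorGain E p (‖x - y‖ / 4) -
        2 * K * (∫ z in ((‖·‖) ⁻¹' Ioo ε (‖x - y‖ / 4) : Set E), ‖z‖ ^ 2 / ‖z‖ ^ p) ≤
      2 * ((∫ z in (‖·‖) ⁻¹' Ioo ε (‖x - y‖ / 4), increment p w x z) -
        ∫ z in (‖·‖) ⁻¹' Ioo ε (‖x - y‖ / 4), increment p w y z) := by
  have hr : 0 < ‖x - y‖ := norm_pos_iff.2 (sub_ne_zero.2 hxy)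
  set e : E := ‖x - y‖⁻¹ • (x - y)
  have he : ‖e‖ = 1 := norm_smul_inv_norm (sub_ne_zero.2 hxy)
  have hxye : x - y = ‖x - y‖ • e := (smul_inv_smul₀ hr.ne' _).symm
  have hu : ∀ z, ‖z‖ ∈ Ioo ε (‖x - y‖ / 4) → |((2 : ℝ) • innerSL ℝ e) z| ≤ ‖x - y‖ / 2 := by
    intro z hz
    have hinner := abs_real_inner_le_norm e z
    rw [he, one_mul] at hinner
    rw [smul_apply, innerSL_apply_apply, smul_eq_mul, abs_mul, abs_two]
    linarith [hz.2]
  have hcoupling := le_setIntegral_increment_coupling hφ hL hxy hp hp' hw hmax measurableSet_Ioo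
    (Ioo_subset_Ico_self.trans (Ico_subset_Ico_right hδ)) hε (ℝ ∙ e)ᗮ.reflection
    ((2 : ℝ) • innerSL ℝ e) hu fun z hz =>
      norm_add_sub_add_reflection he hxye (by
        have hlower : -(‖x - y‖ / 2) ≤ 2 * ⟪e, z⟫ := (abs_le.1 (hu z hz)).1
        linarith)
  refine le_trans ?_ hcoupling
  gcongr
  exact mirrorGain_le_setIntegral_inner_sq_div_rpow_norm ((Nat.cast_nonneg _).trans hp.le) hp' he
    (by positivity) (by linarith)

lemma neg_le_setIntegral_increment_synchronous (hφ : IsHolderModulus φ β m γ) (hL : 0 ≤ L)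
    (hxy : x ≠ y) (hp : Module.finrank ℝ E < p) (hp' : p < Module.finrank ℝ E + 2)
    (hw : TailIntegrable p w)
    (hmax : IsMaxOn (doubled w φ L K x₀) (closedBall x δ ×ˢ closedBall y δ) (x, y))
    (hε : 0 < ε) :
    -(2 * K * (∫ z in ((‖·‖) ⁻¹' Ico ε δ : Set E), ‖z‖ ^ 2 / ‖z‖ ^ p)) ≤
      2 * ((∫ z in (‖·‖) ⁻¹' Ico ε δ, increment p w x z) -
        ∫ z in (‖·‖) ⁻¹' Ico ε δ, increment p w y z) := by
  simpa using le_setIntegral_increment_coupling hφ hL hxy hp hp' hw hmax measurableSet_Ico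
    subset_rfl hε (.refl ℝ E) 0 (fun z _ => by rw [zero_apply, abs_zero]; positivity)
    (fun z _ => by simp)

lemma le_setIntegral_increment_Ioi_of_isMaxOn_doubled (hφ : IsHolderModulus φ β m γ)
    (hL : 0 ≤ L) (hK : 0 ≤ K) (hm : 0 ≤ m) (hxy : x ≠ y)
    (hp : Module.finrank ℝ E < p) (hp' : p < Module.finrank ℝ E + 2) (hw : TailIntegrable p w)
    (hmax : IsMaxOn (doubled w φ L K x₀) (closedBall x δ ×ˢ closedBall y δ) (x, y))
    (hδ : ‖x - y‖ / 4 ≤ δ) (hx : ‖x‖ ≤ R) (hy : ‖y‖ ≤ R) (hwx : |w x| ≤ M) (hwy : |w y| ≤ M)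
    (hε : 0 < ε) (hεr : ε ≤ ‖x - y‖ / 8) :
    L * (m * ‖x - y‖ ^ (γ - 2)) * mirrorGain E p (‖x - y‖ / 4) -
        (2 * K * kernelSecondMoment E p δ +
          4 * (M * kernelTailMass E p δ + ((1 + R) / δ + 1) ^ p * tailNorm p w)) ≤
      2 * ((∫ z in (‖·‖) ⁻¹' Ioi ε, increment p w x z) -
        ∫ z in (‖·‖) ⁻¹' Ioi ε, increment p w y z) := by
  have hr : 0 < ‖x - y‖ := norm_pos_iff.2 (sub_ne_zero.2 hxy)
  have hmirror := le_setIntegral_increment_mirror hφ hL hm hxy hp hp' hw hmax hε hεr hδ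
  have hsync := neg_le_setIntegral_increment_synchronous hφ hL hxy hp hp' hw
    hmax (ε := ‖x - y‖ / 4) (by positivity)
  have hloss := mul_le_mul_of_nonneg_left
    (setIntegral_norm_sq_div_rpow_add_le (E := E) (ε := ε) hp' hδ) hK
  have htail {v : E} (hv : ‖v‖ ≤ R) (hwv : |w v| ≤ M) :=
    abs_le.1 ((hw.abs_setIntegral_increment_le hp (by linarith : 0 < δ) hv).trans
      (add_le_add_left (mul_le_mul_of_nonneg_right hwv (kernelTailMass_nonneg p δ)) _))
  rw [hw.setIntegral_increment_Ioi_eq_add hp hε (by linarith) hδ x,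
    hw.setIntegral_increment_Ioi_eq_add hp hε (by linarith) hδ y]
  linarith [(htail hx hwx).1, (htail hy hwy).2]

lemma le_principalValue_sub_of_isMaxOn_doubled {gx gy : ℝ} (hφ : IsHolderModulus φ β m γ)
    (hL : 0 ≤ L) (hK : 0 ≤ K) (hm : 0 ≤ m) (hxy : x ≠ y)
    (hp : Module.finrank ℝ E < p) (hp' : p < Module.finrank ℝ E + 2) (hw : TailIntegrable p w)
    (hmax : IsMaxOn (doubled w φ L K x₀) (closedBall x δ ×ˢ closedBall y δ) (x, y))
    (hδ : ‖x - y‖ / 4 ≤ δ) (hx : ‖x‖ ≤ R) (hy : ‖y‖ ≤ R) (hwx : |w x| ≤ M) (hwy : |w y| ≤ M)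
    (hgx : HasPrincipalValueIncrement p w x gx) (hgy : HasPrincipalValueIncrement p w y gy) :
    L * (m * ‖x - y‖ ^ (γ - 2)) * mirrorGain E p (‖x - y‖ / 4) -
        (2 * K * kernelSecondMoment E p δ +
          4 * (M * kernelTailMass E p δ + ((1 + R) / δ + 1) ^ p * tailNorm p w)) ≤
      2 * (gx - gy) := by
  have hr : 0 < ‖x - y‖ / 8 := div_pos (norm_pos_iff.2 (sub_ne_zero.2 hxy)) (by norm_num)
  refine ge_of_tendsto ((hgx.sub hgy).const_mul 2) ?_
  filter_upwards [Ioo_mem_nhdsGT hr] with ε hε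
  exact le_setIntegral_increment_Ioi_of_isMaxOn_doubled hφ hL hK hm hxy hp hp' hw hmax hδ hx hy
    hwx hwy hε.1 hε.2.le

end PrincipalValue

section Maximum

variable {E : Type*} [NormedAddCommGroup E] {w : E → ℝ} {φ : ℝ → ℝ} {L K M R β m γ : ℝ}
  {x₀ x y : E}

lemma exists_isMaxOn_doubled [ProperSpace E] (hw : ContinuousOn w (closedBall 0 R))
    (hφ : Continuous φ) (hR : 0 ≤ R) (L K : ℝ) (x₀ : E) :
    ∃ x ∈ closedBall (0 : E) R, ∃ y ∈ closedBall (0 : E) R,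
      IsMaxOn (doubled w φ L K x₀) (closedBall 0 R ×ˢ closedBall 0 R) (x, y) := by
  have hne : (closedBall (0 : E) R).Nonempty := nonempty_closedBall.2 hR
  have hcont : ContinuousOn (doubled w φ L K x₀) (closedBall 0 R ×ˢ closedBall 0 R) := by
    have hfst : ContinuousOn (fun q : E × E => w q.1) (closedBall 0 R ×ˢ closedBall 0 R) :=
      hw.comp continuousOn_fst fun _ hq => hq.1
    have hsnd : ContinuousOn (fun q : E × E => w q.2) (closedBall 0 R ×ˢ closedBall 0 R) :=
      hw.comp continuousOn_snd fun _ hq => hq.2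
    have hφ' : Continuous fun q : E × E => L * φ ‖q.1 - q.2‖ := by fun_prop
    have hquad : Continuous fun q : E × E => K * ‖q.1 - x₀‖ ^ 2 := by fun_prop
    exact ((hfst.sub hsnd).sub hφ'.continuousOn).sub hquad.continuousOn
  obtain ⟨⟨x, y⟩, ⟨hx, hy⟩, hmax⟩ := ((isCompact_closedBall (0 : E) R).prod
    (isCompact_closedBall 0 R)).exists_isMaxOn (hne.prod hne) hcont
  exact ⟨x, hx, y, hy, hmax⟩

lemma pos_of_doubled_pos (hwx : |w x| ≤ M) (hwy : |w y| ≤ M) (hK : 0 ≤ K)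
    (hLφ : 0 ≤ L * φ ‖x - y‖) (hpos : 0 < doubled w φ L K x₀ (x, y)) : 0 < M := by
  simp only [doubled] at hpos
  have hquad : 0 ≤ K * ‖x - x₀‖ ^ 2 := by positivity
  linarith [(abs_le.1 hwx).2, (abs_le.1 hwy).1]

lemma norm_sub_lt_half_of_doubled_pos (hwx : |w x| ≤ M) (hwy : |w y| ≤ M)
    (hLφ : 0 ≤ L * φ ‖x - y‖) (hpos : 0 < doubled w φ L (8 * M) x₀ (x, y)) :
    ‖x - x₀‖ < 1 / 2 := by
  have hM : 0 < M := pos_of_doubled_pos hwx hwy (by linarith [(abs_nonneg _).trans hwx]) hLφ hpos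
  simp only [doubled] at hpos
  have hsq : 8 * M * ‖x - x₀‖ ^ 2 < 8 * M * (1 / 2) ^ 2 := by
    linarith [(abs_le.1 hwx).2, (abs_le.1 hwy).1]
  exact lt_of_pow_lt_pow_left₀ 2 (by norm_num) (lt_of_mul_lt_mul_left hsq (by positivity))

lemma norm_sub_lt_quarter_of_doubled_pos (hφ : IsHolderModulus φ β m γ) (hβ : 0 ≤ β)
    (hβ1 : β ≤ 1) (hwx : |w x| ≤ M) (hwy : |w y| ≤ M) (hK : 0 ≤ K) (hL : 16 * M ≤ L)
    (hxy : ‖x - y‖ ≤ 4) (hpos : 0 < doubled w φ L K x₀ (x, y)) : ‖x - y‖ < 1 / 4 := by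
  have hL0 : 0 ≤ L := by linarith [(abs_nonneg _).trans hwx]
  by_contra! hge
  have hpow : (1 / 4 : ℝ) ≤ ‖x - y‖ ^ β :=
    calc (1 / 4 : ℝ) = (1 / 4) ^ (1 : ℝ) := (Real.rpow_one _).symm
      _ ≤ (1 / 4) ^ β := Real.rpow_le_rpow_of_exponent_ge (by norm_num) (by norm_num) hβ1
      _ ≤ ‖x - y‖ ^ β := Real.rpow_le_rpow (by norm_num) hge hβ
  have hφ_lower : 1 / 8 ≤ φ ‖x - y‖ := by
    linarith [hφ.half_rpow_le ‖x - y‖ ⟨norm_nonneg _, hxy⟩]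
  have hpenalty : 16 * M * (1 / 8) ≤ L * φ ‖x - y‖ := by gcongr
  have hquad : 0 ≤ K * ‖x - x₀‖ ^ 2 := by positivity
  simp only [doubled] at hpos
  linarith [(abs_le.1 hwx).2, (abs_le.1 hwy).1]

lemma ne_of_doubled_pos (hφ0 : 0 ≤ L * φ 0) (hK : 0 ≤ K)
    (hpos : 0 < doubled w φ L K x₀ (x, y)) : x ≠ y := by
  rintro rfl
  have hquad : 0 ≤ K * ‖x - x₀‖ ^ 2 := by positivity
  simp only [doubled, sub_self, norm_zero] at hpos
  linarith

lemma localized_of_doubled_pos (hφ : IsHolderModulus φ β m γ) (hβ : 0 ≤ β) (hβ1 : β ≤ 1)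
    (hwx : |w x| ≤ M) (hwy : |w y| ≤ M) (hL : 16 * M ≤ L) (hx₀ : ‖x₀‖ ≤ 1 / 2)
    (hxy : ‖x - y‖ ≤ 4) (hpos : 0 < doubled w φ L (8 * M) x₀ (x, y)) :
    x ≠ y ∧ ‖x - y‖ < 1 / 4 ∧ ‖x‖ ≤ 1 ∧ ‖y‖ ≤ 5 / 4 := by
  have hM : 0 ≤ M := (abs_nonneg _).trans hwx
  have hL0 : 0 ≤ L := by linarith
  have hne : x ≠ y := ne_of_doubled_pos (mul_nonneg hL0 (hφ.nonneg (by simp))) (by positivity) hpos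
  have hclose : ‖x - y‖ < 1 / 4 :=
    norm_sub_lt_quarter_of_doubled_pos hφ hβ hβ1 hwx hwy (by positivity) hL hxy hpos
  have hxx₀ : ‖x - x₀‖ < 1 / 2 := norm_sub_lt_half_of_doubled_pos hwx hwy
    (mul_nonneg hL0 (hφ.nonneg ⟨norm_nonneg _, hxy⟩)) hpos
  have hx : ‖x‖ ≤ 1 := by linarith [norm_le_norm_sub_add x x₀]
  exact ⟨hne, hclose, hx, by linarith [norm_le_norm_sub_add y x, norm_sub_rev x y]⟩

end Maximum

section Estimate

variable {E : Type*} [NormedAddCommGroup E] [InnerProductSpace ℝ E] [FiniteDimensional ℝ E]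
  [MeasurableSpace E] [BorelSpace E] {w g : E → ℝ} {φ : ℝ → ℝ} {L M G β m γ p : ℝ} {x₀ y₀ : E}

/-- `w` is a continuous solution in `B₂` of the (unnormalised) equation `(-Δ)^s w = g` with
`p = dim E + 2 * s`, of finite tail norm, and `M`, `G` bound `|w|`, `|g|` on `B₂`. -/
structure IsBoundedSolution (p : ℝ) (w g : E → ℝ) (M G : ℝ) : Prop where
  continuousOn : ContinuousOn w (ball 0 2)
  tailIntegrable : TailIntegrable p w
  abs_le : ∀ x ∈ ball (0 : E) 2, |w x| ≤ M
  abs_rhs_le : ∀ x ∈ ball (0 : E) 2, |g x| ≤ G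
  hasPrincipalValueIncrement : ∀ x ∈ ball (0 : E) 2, HasPrincipalValueIncrement p w x (g x)

namespace IsBoundedSolution

lemma nonneg (hw : IsBoundedSolution p w g M G) : 0 ≤ M :=
  (abs_nonneg _).trans (hw.abs_le 0 (by simp))

lemma rhs_nonneg (hw : IsBoundedSolution p w g M G) : 0 ≤ G :=
  (abs_nonneg _).trans (hw.abs_rhs_le 0 (by simp))

lemma mul_mirrorGain_le_of_isMaxOn_doubled (hw : IsBoundedSolution p w g M G)
    (hφ : IsHolderModulus φ β m γ) (hβ : 0 ≤ β) (hβ1 : β ≤ 1) (hm : 0 ≤ m)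
    (hγ : Module.finrank ℝ E + γ ≤ p)
    (hp : Module.finrank ℝ E < p) (hp' : p < Module.finrank ℝ E + 2) (hL : 16 * M ≤ L)
    (hx₀ : ‖x₀‖ ≤ 1 / 2) {x y : E} (hx : ‖x‖ ≤ 3 / 2) (hy : ‖y‖ ≤ 3 / 2)
    (hmax : IsMaxOn (doubled w φ L (8 * M) x₀)
      (closedBall 0 (3 / 2) ×ˢ closedBall 0 (3 / 2)) (x, y))
    (hpos : 0 < doubled w φ L (8 * M) x₀ (x, y)) :
    L * (m * mirrorGain E p (1 / 4)) ≤
      16 * M * kernelSecondMoment E p (1 / 4) +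
        4 * (M * kernelTailMass E p (1 / 4) + 10 ^ p * tailNorm p w) + 4 * G := by
  have hball {v : E} (hv : ‖v‖ ≤ 3 / 2) : v ∈ ball (0 : E) 2 :=
    mem_ball_zero_iff.2 (by linarith)
  have hM := hw.nonneg
  have hL0 : 0 ≤ L := by linarith
  have hwx := hw.abs_le x (hball hx)
  have hwy := hw.abs_le y (hball hy)
  obtain ⟨hxy, hr, hx1, hy1⟩ := localized_of_doubled_pos hφ hβ hβ1 hwx hwy hL hx₀
    ((norm_sub_le x y).trans (by linarith)) hpos
  have hsub : closedBall x (1 / 4) ×ˢ closedBall y (1 / 4) ⊆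
      closedBall (0 : E) (3 / 2) ×ˢ closedBall (0 : E) (3 / 2) :=
    prod_mono (closedBall_subset_closedBall' (by rw [dist_zero_right]; linarith))
      (closedBall_subset_closedBall' (by rw [dist_zero_right]; linarith))
  have hpv := le_principalValue_sub_of_isMaxOn_doubled hφ hL0 (by positivity) hm hxy hp hp'
    hw.tailIntegrable (hmax.on_subset hsub) (by linarith) (hx1.trans (by norm_num)) hy1 hwx hwy
    (hw.hasPrincipalValueIncrement x (hball hx)) (hw.hasPrincipalValueIncrement y (hball hy))
  have hgain : L * (m * mirrorGain E p (1 / 4)) ≤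
      L * (m * ‖x - y‖ ^ (γ - 2)) * mirrorGain E p (‖x - y‖ / 4) := by
    rw [div_eq_mul_one_div ‖x - y‖, mul_assoc L, mul_assoc m]
    gcongr
    exact mirrorGain_le_rpow_mul_mirrorGain hγ (by norm_num) (norm_pos_iff.2 (sub_ne_zero.2 hxy))
      (by linarith)
  have hgx := (_root_.abs_le.1 (hw.abs_rhs_le x (hball hx))).2
  have hgy := (_root_.abs_le.1 (hw.abs_rhs_le y (hball hy))).1
  norm_num only at hpv
  linarith

lemma sub_le_mul_modulus (hw : IsBoundedSolution p w g M G) (hφ : IsHolderModulus φ β m γ)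
    (hβ : 0 ≤ β) (hβ1 : β ≤ 1) (hm : 0 ≤ m) (hγ : Module.finrank ℝ E + γ ≤ p)
    (hp : Module.finrank ℝ E < p) (hp' : p < Module.finrank ℝ E + 2) (hL : 16 * M ≤ L)
    (hLgain : 16 * M * kernelSecondMoment E p (1 / 4) +
        4 * (M * kernelTailMass E p (1 / 4) + 10 ^ p * tailNorm p w) + 4 * G + M ≤
      L * (m * mirrorGain E p (1 / 4)))
    (hx₀ : ‖x₀‖ ≤ 1 / 2) (hy₀ : ‖y₀‖ ≤ 1 / 2) : w x₀ - w y₀ ≤ L * φ ‖x₀ - y₀‖ := by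
  by_contra! hlt
  have hM := hw.nonneg
  obtain ⟨x, hx, y, hy, hmax⟩ := exists_isMaxOn_doubled (R := 3 / 2)
    (hw.continuousOn.mono (closedBall_subset_ball (by norm_num))) hφ.continuous (by norm_num)
    L (8 * M) x₀
  have hpos : 0 < doubled w φ L (8 * M) x₀ (x, y) := by
    have hpos₀ : 0 < doubled w φ L (8 * M) x₀ (x₀, y₀) := by simpa [doubled] using hlt
    exact hpos₀.trans_le (hmax ⟨mem_closedBall_zero_iff.2 (by linarith),
      mem_closedBall_zero_iff.2 (by linarith)⟩)
  rw [mem_closedBall_zero_iff] at hx hy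
  have hgain := hw.mul_mirrorGain_le_of_isMaxOn_doubled hφ hβ hβ1 hm hγ hp hp' hL hx₀ hx hy hmax
    hpos
  have hMpos : 0 < M := pos_of_doubled_pos (hw.abs_le x (mem_ball_zero_iff.2 (by linarith)))
    (hw.abs_le y (mem_ball_zero_iff.2 (by linarith))) (by positivity)
    (mul_nonneg (by linarith)
      (hφ.nonneg ⟨norm_nonneg _, (norm_sub_le x y).trans (by linarith)⟩)) hpos
  linarith

lemma loss_le_mul_add (hw : IsBoundedSolution p w g M G) :
    16 * M * kernelSecondMoment E p (1 / 4) +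
        4 * (M * kernelTailMass E p (1 / 4) + 10 ^ p * tailNorm p w) + 4 * G + M ≤
      (16 * kernelSecondMoment E p (1 / 4) + 4 * kernelTailMass E p (1 / 4) + 4 * 10 ^ p + 5) *
        (tailNorm p w + M + G) := by
  have hM := hw.nonneg
  have hG := hw.rhs_nonneg
  have htail := tailNorm_nonneg p w
  have hJ₀ := kernelSecondMoment_nonneg (E := E) p (1 / 4)
  have hJ₁ := kernelTailMass_nonneg (E := E) p (1 / 4)
  set S := tailNorm p w + M + G
  calc _ ≤ 16 * S * kernelSecondMoment E p (1 / 4) +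
        4 * (S * kernelTailMass E p (1 / 4) + 10 ^ p * S) + 4 * S + S := by
          gcongr <;> simp only [S] <;> linarith
    _ = _ := by ring

end IsBoundedSolution

theorem exists_abs_sub_le_of_isBoundedSolution {s : ℝ} (hβ : 0 < β) (hβ1 : β ≤ 1) (hs : s < 1)
    (hβs : β < 2 * s) :
    ∃ C, 1 ≤ C ∧ ∀ (w g : E → ℝ) (M G : ℝ),
      IsBoundedSolution (Module.finrank ℝ E + 2 * s) w g M G →
      ∀ x ∈ ball (0 : E) (1 / 2), ∀ y ∈ ball (0 : E) (1 / 2),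
        |w x - w y| ≤
          C * (tailNorm (Module.finrank ℝ E + 2 * s) w + M + G) * ‖x - y‖ ^ β := by
  obtain ⟨φ, m, γ, hm, hγ, hφ⟩ := exists_isHolderModulus hβ hβ1 hs hβs
  set p : ℝ := Module.finrank ℝ E + 2 * s
  set κ := m * mirrorGain E p (1 / 4)
  have hκ : 0 < κ := mul_pos hm (mirrorGain_pos (by norm_num))
  set A := 16 * kernelSecondMoment E p (1 / 4) + 4 * kernelTailMass E p (1 / 4) + 4 * 10 ^ p + 5
  have hA : 0 ≤ A := by
    have hJ₀ := kernelSecondMoment_nonneg (E := E) p (1 / 4)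
    have hJ₁ := kernelTailMass_nonneg (E := E) p (1 / 4)
    positivity
  have hAκ : 0 ≤ A / κ := by positivity
  refine ⟨16 + A / κ, by linarith, fun w g M G hw => ?_⟩
  have hM := hw.nonneg
  set S := tailNorm p w + M + G
  have hMS : M ≤ S := by simp only [S]; linarith [hw.rhs_nonneg, tailNorm_nonneg p w]
  have hS : 0 ≤ S := hM.trans hMS
  have hL : 16 * M ≤ (16 + A / κ) * S := by gcongr; linarith
  have hLgain := hw.loss_le_mul_add.trans <|
    calc A * S ≤ 16 * S * κ + A * S :=
          le_add_of_nonneg_left (mul_nonneg (mul_nonneg (by norm_num) hS) hκ.le)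
      _ = (16 + A / κ) * S * κ := by field_simp
  have hsub {x y : E} (hx : x ∈ ball (0 : E) (1 / 2)) (hy : y ∈ ball (0 : E) (1 / 2)) :
      w x - w y ≤ (16 + A / κ) * S * ‖x - y‖ ^ β := by
    rw [mem_ball_zero_iff] at hx hy
    refine (hw.sub_le_mul_modulus hφ hβ.le hβ1 hm.le (by simp only [p]; linarith)
      (by simp only [p]; linarith) (by simp only [p]; linarith) hL hLgain hx.le hy.le).trans ?_
    gcongr
    exact hφ.le_rpow _ ⟨norm_nonneg _, (norm_sub_le x y).trans (by linarith)⟩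
  exact fun x hx y hy => abs_sub_le_iff.2 ⟨hsub hx hy, norm_sub_rev x y ▸ hsub hy hx⟩

end Estimate

section FractionalLaplacian

variable {n : ℕ} {s g : ℝ} {w h : EuclideanSpace ℝ (Fin n) → ℝ} {x : EuclideanSpace ℝ (Fin n)}

/-- The normalising constant `C_{n,s}` of the fractional Laplacian. -/
noncomputable def fracLapConst (n : ℕ) (s : ℝ) : ℝ :=
  2 ^ (2 * s) * s * Real.Gamma (s + n / 2) / (Real.pi ^ ((n : ℝ) / 2) * Real.Gamma (1 - s))

lemma fracLapConst_pos (hs0 : 0 < s) (hs1 : s < 1) : 0 < fracLapConst n s := by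
  have hnum : 0 < Real.Gamma (s + n / 2) := Real.Gamma_pos_of_pos (by positivity)
  have hden : 0 < Real.Gamma (1 - s) := Real.Gamma_pos_of_pos (by linarith)
  exact div_pos (mul_pos (by positivity) hnum) (mul_pos (by positivity) hden)

lemma setIntegral_div_dist_rpow_eq_increment (p ε : ℝ) (w : EuclideanSpace ℝ (Fin n) → ℝ)
    (x : EuclideanSpace ℝ (Fin n)) :
    ∫ y in {y | ε < dist y x}, (w x - w y) / dist x y ^ p =
      ∫ z in (‖·‖) ⁻¹' Ioi ε, increment p w x z := by
  have hpre : (x + ·) ⁻¹' {y | ε < dist y x} = (‖·‖) ⁻¹' Ioi ε := by ext z; simp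
  rw [← hpre, ← (measurePreserving_add_left volume x).setIntegral_preimage_emb
    (measurableEmbedding_addLeft x)]
  simp only [increment, dist_self_add_right]

lemma hasPrincipalValueIncrement_of_fracLapEq (hs0 : 0 < s) (hs1 : s < 1)
    (hw : fracLapEq n s w x g) :
    HasPrincipalValueIncrement (n + 2 * s) w x (g / fracLapConst n s) := by
  simp only [fracLapEq, setIntegral_div_dist_rpow_eq_increment] at hw
  refine (hw.div_const (fracLapConst n s)).congr fun ε => ?_
  exact mul_div_cancel_left₀ _ (fracLapConst_pos hs0 hs1).ne'

lemma abs_le_supOn {α : Type*} {S : Set α} {f : α → ℝ} (hf : ∃ M, ∀ x ∈ S, |f x| ≤ M) {x : α}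
    (hx : x ∈ S) : |f x| ≤ supOn S f :=
  le_csSup (hf.imp fun _ hM => forall_mem_image.2 hM) (mem_image_of_mem _ hx)

lemma isBoundedSolution_of_fracLapEq (hs0 : 0 < s) (hs1 : s < 1)
    (hw : ContinuousOn w (ball 0 2)) (hwM : ∃ M, ∀ x ∈ ball 0 2, |w x| ≤ M)
    (htail : TailIntegrable (n + 2 * s) w) (hh : ∃ M, ∀ x ∈ ball 0 2, |h x| ≤ M)
    (heq : ∀ x ∈ ball 0 2, fracLapEq n s w x (h x)) :
    IsBoundedSolution (n + 2 * s) w (fun x => h x / fracLapConst n s) (supOn (ball 0 2) w)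
      (supOn (ball 0 2) h / fracLapConst n s) where
  continuousOn := hw
  tailIntegrable := htail
  abs_le _ hx := abs_le_supOn hwM hx
  abs_rhs_le x hx := by
    have hc := fracLapConst_pos (n := n) hs0 hs1
    rw [abs_div, abs_of_pos hc]
    gcongr
    exact abs_le_supOn hh hx
  hasPrincipalValueIncrement x hx :=
    hasPrincipalValueIncrement_of_fracLapEq hs0 hs1 (heq x hx)

theorem interior_Holder_estimate_fracLap_general (n : ℕ) {s β : ℝ} (hs : s < 1) (hβ : 0 < β)
    (hβ2s : β < 2 * s) (hβ1 : β ≤ 1) :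
    ∃ C : ℝ, ∀ w h : EuclideanSpace ℝ (Fin n) → ℝ,
      ContinuousOn w (ball 0 2) → (∃ M, ∀ x ∈ ball 0 2, |w x| ≤ M) →
      TailIntegrable (n + 2 * s) w → (∃ M, ∀ x ∈ ball 0 2, |h x| ≤ M) →
      (∀ x ∈ ball 0 2, fracLapEq n s w x (h x)) →
      (∀ x ∈ ball 0 (1 / 2), ∀ y ∈ ball 0 (1 / 2),
        |w x - w y| ≤
          C * (tailNorm (n + 2 * s) w + supOn (ball 0 2) w + supOn (ball 0 2) h) *
            dist x y ^ β) ∧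
      ∀ x ∈ ball 0 (1 / 2),
        |w x| ≤ C * (tailNorm (n + 2 * s) w + supOn (ball 0 2) w + supOn (ball 0 2) h) := by
  obtain ⟨C, hC, hHolder⟩ :=
    exists_abs_sub_le_of_isBoundedSolution (E := EuclideanSpace ℝ (Fin n)) hβ hβ1 hs hβ2s
  rw [finrank_euclideanSpace_fin] at hHolder
  set c := fracLapConst n s
  have hc : 0 < c := fracLapConst_pos (by linarith) hs
  refine ⟨C * (1 + 1 / c), fun w h hw hwM htail hh heq => ?_⟩
  have hsol := isBoundedSolution_of_fracLapEq (by linarith) hs hw hwM htail hh heq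
  have hI := tailNorm_nonneg (n + 2 * s) w
  have hM := hsol.nonneg
  have hH : 0 ≤ supOn (ball 0 2) h :=
    (abs_nonneg _).trans (abs_le_supOn hh (mem_ball_self two_pos))
  set I := tailNorm (n + 2 * s) w
  set M := supOn (ball 0 2) w
  set H := supOn (ball 0 2) h
  have hnormalise : I + M + H / c ≤ (1 + 1 / c) * (I + M + H) := by
    have hcross : 0 ≤ 1 / c * (I + M) + H := by positivity
    linear_combination hcross
  refine ⟨fun x hx y hy => ?_, fun x hx => ?_⟩
  · calc |w x - w y| ≤ C * (I + M + H / c) * ‖x - y‖ ^ β := hHolder w _ M _ hsol x hx y hy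
      _ ≤ C * (1 + 1 / c) * (I + M + H) * dist x y ^ β := by
        rw [dist_eq_norm, mul_assoc C (1 + 1 / c)]
        gcongr
  · have hC' : 1 ≤ C * (1 + 1 / c) :=
      one_le_mul_of_one_le_of_one_le hC (le_add_of_nonneg_right (by positivity))
    calc |w x| ≤ M := hsol.abs_le x (ball_subset_ball (by norm_num) hx)
      _ ≤ I + M + H := by linarith
      _ ≤ C * (1 + 1 / c) * (I + M + H) := le_mul_of_one_le_left (by positivity) hC'

end FractionalLaplacian

/-- **Interior Hölder estimate for the fractional Laplacian (Hölder range).** Let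
`0 < β < 2s`, `β ≤ 1`. There is a constant `C = C(n,s,β)` such that if `w` is smooth
with `∫ (1+|x|)^{−n−2s} |w(x)| dx < ∞`, `h` is bounded on `B₂`, and `(−Δ)^s w = h`
in `B₂`, then for all `x, y ∈ B_{1/2}`:
`|w(x) − w(y)| ≤ C (∫ (1+|z|)^{−n−2s}|w(z)|dz + sup_{B₂}|w| + sup_{B₂}|h|) |x−y|^β`,
and `sup_{B_{1/2}} |w| ≤ C (∫ (1+|z|)^{−n−2s}|w(z)|dz + sup_{B₂}|w| + sup_{B₂}|h|)`. -/
theorem interior_Holder_estimate_fracLap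
    (n : ℕ) (hn : 0 < n) (s : ℝ) (hs : s ∈ Set.Ioo (0 : ℝ) 1)
    (β : ℝ) (hβ : 0 < β) (hβ2s : β < 2 * s) (hβ1 : β ≤ 1) :
    ∃ C : ℝ, ∀ w h : EuclideanSpace ℝ (Fin n) → ℝ,
      ContDiff ℝ (⊤ : ℕ∞) w →
      MeasureTheory.Integrable
        (fun x : EuclideanSpace ℝ (Fin n) => (1 + ‖x‖) ^ (-(n : ℝ) - 2 * s) * |w x|) →
      (∃ M, ∀ x ∈ Metric.ball (0 : EuclideanSpace ℝ (Fin n)) 2, |h x| ≤ M) →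
      (∀ x ∈ Metric.ball (0 : EuclideanSpace ℝ (Fin n)) 2, fracLapEq n s w x (h x)) →
      (∀ x ∈ Metric.ball (0 : EuclideanSpace ℝ (Fin n)) (1 / 2),
        ∀ y ∈ Metric.ball (0 : EuclideanSpace ℝ (Fin n)) (1 / 2),
          |w x - w y| ≤
            C * ((∫ z : EuclideanSpace ℝ (Fin n),
                    (1 + ‖z‖) ^ (-(n : ℝ) - 2 * s) * |w z|) +
                  supOn (Metric.ball (0 : EuclideanSpace ℝ (Fin n)) 2) w +
                  supOn (Metric.ball (0 : EuclideanSpace ℝ (Fin n)) 2) h) *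
              dist x y ^ β) ∧
      (∀ x ∈ Metric.ball (0 : EuclideanSpace ℝ (Fin n)) (1 / 2),
        |w x| ≤
          C * ((∫ z : EuclideanSpace ℝ (Fin n),
                  (1 + ‖z‖) ^ (-(n : ℝ) - 2 * s) * |w z|) +
                supOn (Metric.ball (0 : EuclideanSpace ℝ (Fin n)) 2) w +
                supOn (Metric.ball (0 : EuclideanSpace ℝ (Fin n)) 2) h)) := by
  obtain ⟨C, hC⟩ := interior_Holder_estimate_fracLap_general n hs.2 hβ hβ2s hβ1
  refine ⟨C, fun w h hw hint hh heq => ?_⟩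
  obtain ⟨M, hM⟩ :=
    (isCompact_closedBall 0 2).exists_bound_of_continuousOn hw.continuous.continuousOn
  simp only [← neg_add'] at hint ⊢
  exact hC w h hw.continuous.continuousOn ⟨M, fun x hx => hM x (ball_subset_closedBall hx)⟩
    (tailIntegrable_of_integrable_mul_abs hw.continuous.aestronglyMeasurable hint) hh heq
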